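/- The Price of Anarchy of the deg2NCG is in O(√n): there exists an absolute constant c such that for every n ≥ 2, every 2-local Nash equilibrium s of the deg2NCG on n nodes with connected induced graph, and every strategy vector s' on the same n nodes with connected induced graph, cost(G(s)) ≤ c · √n · cost(G(s')). -/

import Mathlib

/-!
Every agent of a connected network pays at least `n - 1` for distances, so any connected
network has social cost at least `n (n - 1)`, and it suffices to show that each agent of a 2-local
equilibrium pays `O(n √n)`.

*Edge costs* (`edge_cost_le`).  Agent `u` may keep only a maximal subset `T` of the nodes she buys
such that the neighbourhoods `N(v) \ {u}`, `v ∈ T`, are pairwise disjoint.  The kept edges then cost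
at most `n` altogether.  By maximality a dropped neighbour shares a neighbour other than `u` with
some node of `T`, hence stays within distance `3` of `u`, so every distance from `u` grows by at
most `2`.  As this deviation does not pay off, `u` spends at most `3n` on edges.

*Distances* (`dist_sq_le`).  Let `p 0, …, p D` be a geodesic.  If `p i` buys an edge to `p (i + 2)`
she pays `deg (p (i + 2))` and gets one step closer to each of `p (i + 2), …, p D`; therefore
`deg (p j) ≥ D - j + 1` for `2 ≤ j ≤ D`.  A node has at most three neighbours on a geodesic, so
`∑ j, deg (p j) ≤ 3n`, and summing up gives `D (D - 1) ≤ 6n`, that is, `D = O(√n)`.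
-/

/-!
Degree price network creation games (degNCG / degkNCG / degAOG / degkAOG).

A strategy vector assigns to each agent `u` a finite set `st u` of nodes to
which `u` buys an edge.  The induced graph has an edge `{u,v}` iff `v ∈ st u`
or `u ∈ st v`.  The cost of agent `u` is the sum of `deg v - 1` over all `v`
to which `u` bought an edge, plus the sum of (extended, i.e. `⊤` when
unreachable) graph distances from `u` to all nodes.
-/

/-- A strategy vector: each agent picks the set of nodes it buys edges to. -/
abbrev Strategy (V : Type) := V → Finset V

variable {V : Type} [Fintype V] [DecidableEq V]

/-- The network induced by a strategy vector: `{u,v}` is an edge iff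
`v ∈ st u` or `u ∈ st v`. -/
def netG (st : Strategy V) : SimpleGraph V :=
  SimpleGraph.fromRel (fun u v => v ∈ st u)

/-- The degree of a node in the induced network. -/
noncomputable def deg (st : Strategy V) (v : V) : ℕ :=
  letI : DecidableRel (netG st).Adj := Classical.decRel _
  (netG st).degree v

/-- The cost of agent `u`: degree-prices of the bought edges plus the sum of
the distances to all nodes (`⊤` if some node is unreachable). -/
noncomputable def cost (st : Strategy V) (u : V) : ℕ∞ :=
  ((∑ v ∈ st u, (deg st v - 1) : ℕ) : ℕ∞) + ∑ w, (netG st).edist u w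

/-- A strategy vector is valid if nobody buys a self-loop and every edge has
exactly one owner. -/
def Valid (st : Strategy V) : Prop :=
  (∀ u, u ∉ st u) ∧ (∀ u v, v ∈ st u → u ∉ st v)

/-- Pure Nash equilibrium of the degNCG: no agent can strictly decrease her
cost by unilaterally switching to any other strategy. -/
def IsNE (st : Strategy V) : Prop :=
  ∀ (u : V) (t : Finset V), u ∉ t →
    cost st u ≤ cost (Function.update st u t) u

/-- `k`-local Nash equilibrium of the degkNCG: no agent can strictly decrease
her cost by a deviation in which every newly bought edge goes to a node at
distance at most `k` in the current graph. -/
def IskNE (k : ℕ) (st : Strategy V) : Prop :=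
  ∀ (u : V) (t : Finset V), u ∉ t →
    (∀ v ∈ t \ st u, (netG st).edist u v ≤ k) →
    cost st u ≤ cost (Function.update st u t) u

/-- Equilibrium of the add-only game degAOG: no agent can strictly decrease
her cost by adding edges (deviations are supersets of the current strategy). -/
def IsAOEq (st : Strategy V) : Prop :=
  ∀ (u : V) (t : Finset V), u ∉ t → st u ⊆ t →
    cost st u ≤ cost (Function.update st u t) u

/-- Equilibrium of the `k`-local add-only game degkAOG. -/
def IskAOEq (k : ℕ) (st : Strategy V) : Prop :=
  ∀ (u : V) (t : Finset V), u ∉ t → st u ⊆ t →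
    (∀ v ∈ t \ st u, (netG st).edist u v ≤ k) →
    cost st u ≤ cost (Function.update st u t) u

/-- The social cost: the sum of all agents' costs. -/
noncomputable def social (st : Strategy V) : ℕ∞ :=
  ∑ u, cost st u

/-- The center sponsored spanning star on `n + 2` nodes: agent `0` buys an
edge to every other agent, everybody else buys nothing. -/
def starStrat (n : ℕ) : Strategy (Fin (n + 2)) := fun u =>
  if u = 0 then ({0} : Finset (Fin (n + 2)))ᶜ else ∅


lemma netG_adj {st : Strategy V} {a b : V} :
    (netG st).Adj a b ↔ a ≠ b ∧ (b ∈ st a ∨ a ∈ st b) := by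
  simp [netG, SimpleGraph.fromRel_adj]

open Classical in
lemma deg_eq (st : Strategy V) (v : V) :
    deg st v = (Finset.univ.filter fun x => (netG st).Adj v x).card := by
  unfold deg
  rw [← SimpleGraph.card_neighborFinset_eq_degree]
  congr 1
  ext x
  simp

lemma deg_mono {st st' : Strategy V} {v : V}
    (h : ∀ x, (netG st).Adj v x → (netG st').Adj v x) : deg st v ≤ deg st' v := by
  classical
  rw [deg_eq, deg_eq]
  apply Finset.card_le_card
  intro x
  simpa using h x

/-- In a connected network the cost is the natural number computed from the ordinary distances. -/
lemma cost_eq_coe {st : Strategy V} (h : (netG st).Connected) (u : V) :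
    cost st u =
      ((∑ v ∈ st u, (deg st v - 1) + ∑ w, (netG st).dist u w : ℕ) : ℕ∞) := by
  unfold cost
  push_cast
  congr 1
  exact Finset.sum_congr rfl fun w _ => (h.preconnected u w).coe_dist_eq_edist.symm

lemma adj_update_iff {st : Strategy V} {u : V} {T : Finset V} {a b : V}
    (ha : a ≠ u) (hb : b ≠ u) :
    (netG (Function.update st u T)).Adj a b ↔ (netG st).Adj a b := by
  simp [netG_adj, ha, hb]

/-- If every dropped edge `{u, v}` is bypassed by a path of length `3`, then the distances from `u`
increase by at most `2`. -/
lemma edist_keep_le {st : Strategy V} {u : V} {T : Finset V}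
    (hT : ∀ v ∈ st u, v ∉ T → ∃ v' ∈ T, ∃ x, x ≠ u ∧ v' ≠ u ∧ v ≠ u ∧
      (netG st).Adj v' x ∧ (netG st).Adj v x) (d : ℕ) :
    ∀ w, w ≠ u → (p : (netG st).Walk w u) → p.length = d →
      (netG (Function.update st u T)).edist w u ≤ d + 2 := by
  induction d with
  | zero =>
    intro w hw p hp
    exact absurd (SimpleGraph.Walk.eq_of_length_eq_zero hp) hw
  | succ d ih =>
    intro w hw p hp
    cases p with
    | nil => exact absurd rfl hw
    | @cons _ y _ hadj q =>
      simp only [SimpleGraph.Walk.length_cons, Nat.add_right_cancel_iff] at hp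
      by_cases hy : y = u
      · subst hy
        have hone : (netG (Function.update st y T)).Adj w y →
            (netG (Function.update st y T)).edist w y ≤ ((d + 1 : ℕ) : ℕ∞) + 2 := by
          intro h
          refine (SimpleGraph.Walk.edist_le h.toWalk).trans ?_
          norm_cast
          simp
        rcases (netG_adj.1 hadj).2 with h | h
        · exact hone (netG_adj.2 ⟨hw, Or.inl (by simpa [hw] using h)⟩)
        · by_cases hwT : w ∈ T
          · exact hone (netG_adj.2 ⟨hw, Or.inr (by simpa using hwT)⟩)
          · obtain ⟨v', hv', x, hx, hv'u, -, h1, h2⟩ := hT w h hwT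
            have a1 := (adj_update_iff (T := T) hw hx).2 h2
            have a2 := (adj_update_iff (T := T) hx hv'u).2 h1.symm
            have a3 : (netG (Function.update st y T)).Adj v' y :=
              netG_adj.2 ⟨hv'u, Or.inr (by simpa using hv')⟩
            refine (SimpleGraph.Walk.edist_le
              (SimpleGraph.Walk.cons a1 (.cons a2 (.cons a3 .nil)))).trans ?_
            norm_cast
            simp only [SimpleGraph.Walk.length_cons, SimpleGraph.Walk.length_nil]
            omega
      · have h1 := ih y hy q hp
        have h2 := (adj_update_iff (T := T) hw hy).2 hadj
        calc _ ≤ (netG (Function.update st u T)).edist w y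
                + (netG (Function.update st u T)).edist y u := SimpleGraph.edist_triangle
          _ ≤ 1 + (d + 2) := by
              gcongr
              simpa using SimpleGraph.Walk.edist_le h2.toWalk
          _ = _ := by push_cast; ring

/-- In a 2-local equilibrium each agent spends at most `3n` on edges. -/
lemma edge_cost_le {st : Strategy V} (hv : Valid st) (hne : IskNE 2 st)
    (hc : (netG st).Connected) (u : V) :
    ∑ v ∈ st u, (deg st v - 1) ≤ 3 * Fintype.card V := by
  classical
  let N : V → Finset V := fun v => Finset.univ.filter fun x => x ≠ u ∧ (netG st).Adj v x
  have hfin : ((st u).powerset.filter fun T : Finset V => (T : Set V).PairwiseDisjoint N).Nonempty :=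
    ⟨∅, by simp⟩
  obtain ⟨T, hTmax⟩ := Finset.exists_maximal hfin
  have hTmem := hTmax.prop
  simp only [Finset.mem_filter, Finset.mem_powerset] at hTmem
  obtain ⟨hTsub, hTdisj⟩ := hTmem
  have hnu : ∀ v ∈ st u, v ≠ u := fun v h e => hv.1 u (e ▸ h)
  have hbypass : ∀ v ∈ st u, v ∉ T → ∃ v' ∈ T, ∃ x, x ≠ u ∧ v' ≠ u ∧ v ≠ u ∧
      (netG st).Adj v' x ∧ (netG st).Adj v x := by
    intro v hvu hvT
    by_contra! hcon
    have hins : (insert v T) ∈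
        (st u).powerset.filter fun T : Finset V => (T : Set V).PairwiseDisjoint N := by
      simp only [Finset.mem_filter, Finset.mem_powerset]
      refine ⟨Finset.insert_subset hvu hTsub, ?_⟩
      rw [Finset.coe_insert]
      refine hTdisj.insert fun v' hv' _ => ?_
      rw [Finset.disjoint_left]
      intro x hx hx'
      simp only [N, Finset.mem_filter, Finset.mem_univ, true_and] at hx hx'
      exact hcon v' hv' x hx.1 (hnu v' (hTsub hv')) (hnu v hvu) hx'.2 hx.2
    exact hvT (hTmax.le_of_ge hins (Finset.subset_insert v T) (Finset.mem_insert_self v T))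
  set st' := Function.update st u T with hst'
  have hsub : ∀ a b, (netG st').Adj a b → (netG st).Adj a b := by
    intro a b h
    rw [netG_adj] at h ⊢
    refine ⟨h.1, h.2.imp ?_ ?_⟩ <;> intro h
    · by_cases ha : a = u
      · subst ha; exact hTsub (by simpa [hst'] using h)
      · simpa [hst', ha] using h
    · by_cases hb : b = u
      · subst hb; exact hTsub (by simpa [hst'] using h)
      · simpa [hst', hb] using h
  have hprice : ∑ v ∈ T, (deg st' v - 1) ≤ Fintype.card V := by
    calc ∑ v ∈ T, (deg st' v - 1) ≤ ∑ v ∈ T, (N v).card := by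
          refine Finset.sum_le_sum fun v _ => ?_
          have h1 : deg st' v ≤ deg st v := deg_mono (hsub v)
          have h2 : deg st v ≤ (insert u (N v)).card := by
            rw [deg_eq]
            refine Finset.card_le_card fun x hx => ?_
            by_cases hxu : x = u <;> simp_all [N]
          have h3 := Finset.card_insert_le u (N v)
          omega
      _ = (T.biUnion N).card := (Finset.card_biUnion fun a ha b hb hab => hTdisj ha hb hab).symm
      _ ≤ Fintype.card V := Finset.card_le_univ _
  have hdist : ∀ w, (netG st').edist u w ≤ (((netG st).dist u w + 2 : ℕ) : ℕ∞) := by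
    intro w
    by_cases hw : w = u
    · subst hw; simp
    · obtain ⟨p, hp⟩ := hc.exists_walk_length_eq_dist w u
      have := edist_keep_le hbypass _ w hw p hp
      rw [SimpleGraph.edist_comm, SimpleGraph.dist_comm]
      exact_mod_cast this
  have hdev := hne u T (fun h => hv.1 u (hTsub h)) (fun v h => by
    have := Finset.mem_sdiff.1 h
    exact absurd (hTsub this.1) this.2)
  rw [cost_eq_coe hc] at hdev
  have hup : cost st' u ≤
      ((Fintype.card V + ∑ w, ((netG st).dist u w + 2) : ℕ) : ℕ∞) := by
    unfold cost
    have : st' u = T := by simp [hst']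
    rw [this, Nat.cast_add]
    refine add_le_add (by exact_mod_cast hprice) ?_
    rw [Nat.cast_sum]
    exact Finset.sum_le_sum fun w _ => hdist w
  have := hdev.trans hup
  rw [Nat.cast_le, Finset.sum_add_distrib] at this
  simp at this
  omega

/-- In a 2-local equilibrium, the degree of a node `x` at distance `2` from `u` is at least the
number of nodes to which a new edge from `u` to `x` would bring `u` closer. -/
lemma card_le_deg {st : Strategy V} (hv : Valid st) (hne : IskNE 2 st)
    (hc : (netG st).Connected) {u x : V} (hux : (netG st).dist u x = 2) (W : Finset V)
    (hW : ∀ w ∈ W, (netG st).dist x w + 2 ≤ (netG st).dist u w) :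
    W.card ≤ deg st x := by
  classical
  have hxu : x ≠ u := by rintro rfl; simp at hux
  have hnadj : ¬ (netG st).Adj u x := by
    intro h; rw [SimpleGraph.dist_eq_one_iff_adj.2 h] at hux; omega
  have hxst : x ∉ st u := fun h => hnadj (netG_adj.2 ⟨hxu.symm, Or.inl h⟩)
  have hedist : (netG st).edist u x = 2 := by
    rw [← (hc.preconnected u x).coe_dist_eq_edist, hux]; rfl
  set st' := Function.update st u (insert x (st u)) with hst'
  have hsub : netG st ≤ netG st' := by
    intro a b h
    rw [netG_adj] at h ⊢
    refine ⟨h.1, h.2.imp ?_ ?_⟩ <;> intro h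
    · by_cases ha : a = u
      · subst ha; simp [hst', h]
      · simpa [hst', ha] using h
    · by_cases hb : b = u
      · subst hb; simp [hst', h]
      · simpa [hst', hb] using h
  have hc' : (netG st').Connected := hc.mono hsub
  have hnew : ∀ a b, a ≠ u → (netG st').Adj a b → (a = x ∧ b = u) ∨ (netG st).Adj a b := by
    intro a b ha h
    rw [netG_adj] at h ⊢
    by_cases hb : b = u
    · subst hb
      have h2 := h.2
      simp only [hst', Function.update_self, Finset.mem_insert, Function.update_of_ne ha] at h2
      tauto
    · have h2 := h.2
      simp only [hst', Function.update_of_ne hb, Function.update_of_ne ha] at h2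
      tauto
  have hdegx : deg st' x ≤ deg st x + 1 := by
    rw [deg_eq, deg_eq]
    refine le_trans (Finset.card_le_card ?_) (Finset.card_insert_le u _)
    intro b hb
    have := hnew x b hxu (by simpa using hb)
    simp only [Finset.mem_insert, Finset.mem_filter, Finset.mem_univ, true_and]
    tauto
  have hdegv : ∀ v ∈ st u, deg st' v ≤ deg st v := by
    intro v hvu
    refine deg_mono fun b hb => ?_
    rcases hnew v b (fun e => hv.1 u (e ▸ hvu)) hb with h | h
    · exact absurd (h.1 ▸ hvu) hxst
    · exact h
  have hdev := hne u (insert x (st u))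
    (by simp only [Finset.mem_insert, not_or]; exact ⟨hxu.symm, hv.1 u⟩) (by
      intro v h
      have hvx : v = x := by
        have := Finset.mem_sdiff.1 h
        simp only [Finset.mem_insert] at this
        tauto
      subst hvx
      exact hedist.le)
  rw [← hst', cost_eq_coe hc, cost_eq_coe hc', Nat.cast_le] at hdev
  have hu : st' u = insert x (st u) := by simp [hst']
  rw [hu, Finset.sum_insert hxst] at hdev
  have h1 : ∑ v ∈ st u, (deg st' v - 1) ≤ ∑ v ∈ st u, (deg st v - 1) :=
    Finset.sum_le_sum fun v h => Nat.sub_le_sub_right (hdegv v h) 1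
  have hadj' : (netG st').Adj u x := netG_adj.2 ⟨hxu.symm, Or.inl (by simp [hst'])⟩
  have hmono : ∀ a w, (netG st').dist a w ≤ (netG st).dist a w := fun a w =>
    (hc.preconnected a w).dist_anti hsub
  have h2 : ∑ w, ((netG st').dist u w + if w ∈ W then 1 else 0) ≤ ∑ w, (netG st).dist u w := by
    refine Finset.sum_le_sum fun w _ => ?_
    split_ifs with hw
    · have := hW w hw
      have t : (netG st').dist u w ≤ (netG st').dist u x + (netG st').dist x w :=
        hc'.dist_triangle
      rw [SimpleGraph.dist_eq_one_iff_adj.2 hadj'] at t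
      have := hmono x w
      omega
    · exact hmono u w
  rw [Finset.sum_add_distrib] at h2
  simp only [Finset.sum_ite_mem, Finset.univ_inter, Finset.sum_const, smul_eq_mul, mul_one] at h2
  omega

/-- Distances in a 2-local equilibrium are `O(√n)`. -/
lemma dist_sq_le {st : Strategy V} (hv : Valid st) (hne : IskNE 2 st)
    (hc : (netG st).Connected) (a b : V) :
    (netG st).dist a b * (netG st).dist a b ≤ 6 * Fintype.card V + (netG st).dist a b := by
  classical
  obtain ⟨q, hq⟩ := hc.exists_walk_length_eq_dist a b
  set D := (netG st).dist a b with hD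
  set p : ℕ → V := q.getVert with hp
  have hpD : p D = b := by rw [← hq]; exact q.getVert_length
  -- Subwalks of `q` bound distances from above; the triangle inequality shows they are geodesic.
  have hle : ∀ i k, i + k ≤ D → (netG st).dist (p i) (p (i + k)) ≤ k := by
    intro i k
    induction k with
    | zero => simp
    | succ k ih =>
      intro hk
      have h1 := ih (by omega)
      have hadj : (netG st).Adj (p (i + k)) (p (i + k + 1)) :=
        q.adj_getVert_succ (by omega)
      have := hc.dist_triangle (u := p i) (v := p (i + k)) (w := p (i + k + 1))
      rw [SimpleGraph.dist_eq_one_iff_adj.2 hadj] at this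
      rw [← add_assoc]
      omega
  have hp0 : p 0 = a := q.getVert_zero
  have heq : ∀ i k, i + k ≤ D → (netG st).dist (p i) (p (i + k)) = k := by
    intro i k hk
    have h1 := hle 0 i (by omega)
    have h2 := hle i k hk
    have h3 := hle (i + k) (D - (i + k)) (by omega)
    rw [show i + k + (D - (i + k)) = D by omega, hpD] at h3
    rw [zero_add, hp0] at h1
    have t1 := hc.dist_triangle (u := a) (v := p i) (w := b)
    have t2 := hc.dist_triangle (u := p i) (v := p (i + k)) (w := b)
    omega
  have hlev : ∀ j ≤ D, (netG st).dist a (p j) = j := by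
    intro j hj
    have := heq 0 j (by omega)
    rwa [hp0, zero_add] at this
  have hdeg : ∀ i, i + 2 ≤ D → D - (i + 1) ≤ deg st (p (i + 2)) := by
    intro i hi
    have hinj : Set.InjOn p (Finset.Icc (i + 2) D : Finset ℕ) := by
      intro j hj k hk h
      simp only [Finset.coe_Icc, Set.mem_Icc] at hj hk
      rw [← hlev j hj.2, ← hlev k hk.2, h]
    have := card_le_deg hv hne hc (heq i 2 hi) ((Finset.Icc (i + 2) D).image p) (by
      intro w hw
      obtain ⟨j, hj, rfl⟩ := Finset.mem_image.1 hw
      obtain ⟨hj1, hj2⟩ := Finset.mem_Icc.1 hj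
      obtain ⟨k, rfl⟩ := Nat.exists_eq_add_of_le hj1
      rw [heq (i + 2) k hj2, show i + 2 + k = i + (2 + k) by omega, heq i (2 + k) (by omega)]
      omega)
    rw [Finset.card_image_of_injOn hinj, Nat.card_Icc] at this
    omega
  have hsum : ∑ i ∈ Finset.range (D - 1), deg st (p (i + 2)) ≤ 3 * Fintype.card V := by
    calc ∑ i ∈ Finset.range (D - 1), deg st (p (i + 2))
        = ∑ x : V, ((Finset.range (D - 1)).filter
            fun i => (netG st).Adj (p (i + 2)) x).card := by
          simp_rw [deg_eq, Finset.card_filter]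
          exact Finset.sum_comm
      _ ≤ ∑ _x : V, 3 := by
          refine Finset.sum_le_sum fun x _ => ?_
          -- A neighbour of `x` on the geodesic has distance `d(a,x) - 1, …, d(a,x) + 1` from `a`.
          have : ((Finset.range (D - 1)).filter fun i => (netG st).Adj (p (i + 2)) x).card ≤
              (Finset.Icc ((netG st).dist a x - 1) ((netG st).dist a x + 1)).card := by
            refine Finset.card_le_card_of_injOn (fun i => i + 2) ?_
              (fun i _ j _ h => by simpa using h)
            intro i hi
            simp only [Finset.coe_filter, Finset.mem_range, Set.mem_ofPred_eq] at hi
            have h1 := hlev (i + 2) (by omega)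
            have e := SimpleGraph.dist_eq_one_iff_adj.2 hi.2
            have e' := SimpleGraph.dist_eq_one_iff_adj.2 hi.2.symm
            have t1 := hc.dist_triangle (u := a) (v := p (i + 2)) (w := x)
            have t2 := hc.dist_triangle (u := a) (v := x) (w := p (i + 2))
            simp only [Finset.coe_Icc, Set.mem_Icc]
            omega
          rw [Nat.card_Icc] at this
          omega
      _ = 3 * Fintype.card V := by simp [mul_comm]
  have hlow : ∑ i ∈ Finset.range (D - 1), (i + 1) ≤ 3 * Fintype.card V := by
    refine le_trans ?_ hsum
    rw [← Finset.sum_range_reflect]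
    refine Finset.sum_le_sum fun i hi => ?_
    rw [Finset.mem_range] at hi
    have := hdeg i (by omega)
    omega
  have hgauss : ∀ m : ℕ, 2 * ∑ i ∈ Finset.range m, (i + 1) = m * (m + 1) := by
    intro m
    induction m with
    | zero => simp
    | succ m ih => rw [Finset.sum_range_succ, mul_add, ih]; ring
  have := hgauss (D - 1)
  rcases Nat.eq_zero_or_pos D with h0 | h0
  · rw [h0]; omega
  · obtain ⟨m, hm⟩ : ∃ m, D = m + 1 := ⟨D - 1, by omega⟩
    rw [hm] at this hlow ⊢
    simp only [Nat.add_sub_cancel] at this hlow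
    nlinarith

/-- The social cost as a natural number, for connected networks. -/
lemma social_toNat {st : Strategy V} (h : (netG st).Connected) :
    (social st).toNat =
      ∑ u, (∑ v ∈ st u, (deg st v - 1) + ∑ w, (netG st).dist u w) := by
  unfold social
  simp_rw [cost_eq_coe h]
  rw [← Nat.cast_sum, ENat.toNat_natCast]

lemma card_mul_pred_le_social {st : Strategy V} (h : (netG st).Connected) :
    Fintype.card V * (Fintype.card V - 1) ≤ (social st).toNat := by
  rw [social_toNat h]
  calc Fintype.card V * (Fintype.card V - 1) = ∑ _u : V, (Fintype.card V - 1) := by simp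
    _ ≤ _ := by
      refine Finset.sum_le_sum fun u _ => le_trans ?_ (Nat.le_add_left _ _)
      calc Fintype.card V - 1 = ∑ w ∈ Finset.univ.erase u, 1 := by simp
        _ ≤ ∑ w ∈ Finset.univ.erase u, (netG st).dist u w :=
            Finset.sum_le_sum fun w hw => h.pos_dist_of_ne (Finset.ne_of_mem_erase hw).symm
        _ ≤ _ := Finset.sum_le_sum_of_subset (Finset.erase_subset _ _)

/-- The Price of Anarchy of the deg2NCG is in `O(√n)`: there is
an absolute constant `c` such that for every `n ≥ 2`, every 2-local Nash
equilibrium with connected induced graph has social cost at most `c √n` times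
the social cost of any strategy vector on the same node set with connected
induced graph.  (Under connectedness all costs are finite, so `ENat.toNat`
returns the actual social cost.) -/
theorem PoA_deg2NCG :
    ∃ c : ℝ, 0 < c ∧ ∀ (n : ℕ), 2 ≤ n → ∀ st : Strategy (Fin n), Valid st →
      IskNE 2 st → (netG st).Connected →
      ∀ st' : Strategy (Fin n), Valid st' → (netG st').Connected →
        ((social st).toNat : ℝ) ≤
          c * Real.sqrt n * ((social st').toNat : ℝ) := by
  refine ⟨14, by norm_num, ?_⟩
  intro n hn st hv hne hc st' _ hc'
  have hlow := card_mul_pred_le_social hc'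
  rw [Fintype.card_fin] at hlow
  have hlow' : (n : ℝ) * (n - 1) ≤ ((social st').toNat : ℝ) := by
    have : ((n * (n - 1) : ℕ) : ℝ) ≤ ((social st').toNat : ℝ) := by exact_mod_cast hlow
    rwa [Nat.cast_mul, Nat.cast_sub (by omega), Nat.cast_one] at this
  have hn' : (2 : ℝ) ≤ n := by exact_mod_cast hn
  set r := Real.sqrt n with hr
  have hr2 : r * r = n := Real.mul_self_sqrt (by positivity)
  have hr1 : 1 ≤ r := Real.one_le_sqrt.2 (by linarith)
  have hdist : ∀ a b, ((netG st).dist a b : ℝ) ≤ 4 * r := by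
    intro a b
    have h := dist_sq_le hv hne hc a b
    rw [Fintype.card_fin] at h
    have h' : ((netG st).dist a b : ℝ) * (netG st).dist a b ≤ 6 * n + (netG st).dist a b := by
      exact_mod_cast h
    by_contra! hcon
    nlinarith
  have hup : ((social st).toNat : ℝ) ≤ n * (3 * n + n * (4 * r)) := by
    rw [social_toNat hc]
    push_cast
    calc _ ≤ ∑ _u : Fin n, (3 * (n : ℝ) + n * (4 * r)) := by
          refine Finset.sum_le_sum fun u _ => add_le_add ?_ ?_
          · have := edge_cost_le hv hne hc u
            rw [Fintype.card_fin] at this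
            exact_mod_cast this
          · calc _ ≤ ∑ _w : Fin n, 4 * r := Finset.sum_le_sum fun w _ => hdist u w
              _ = _ := by simp
      _ = _ := by simp [mul_add]
  calc ((social st).toNat : ℝ) ≤ n * (3 * n + n * (4 * r)) := hup
    _ ≤ 7 * r * (n * n) := by nlinarith [mul_nonneg (mul_self_nonneg (n : ℝ)) (sub_nonneg.2 hr1)]
    _ ≤ 14 * r * (n * (n - 1)) := by
        have : (n : ℝ) * n ≤ 2 * (n * (n - 1)) := by nlinarith
        nlinarith
    _ ≤ 14 * r * ((social st').toNat : ℝ) := by gcongr
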